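/- Let n ≥ 1 and let w be a permutation of [n] avoiding the patterns 1432 and 1423, with Rothe diagram D(w) = (D_1,…,D_n). For each 1 ≤ j ≤ n, let a_j be the largest integer a ≥ 0 such that {1,…,a} ⊆ D_j, and set D'_j = D_j ∖ {1,…,a_j}. Then for all 1 ≤ j_1 < j_2 ≤ n, the sets D'_{j_1} and D'_{j_2} are disjoint. -/

import Mathlib

/-- The Rothe diagram of a permutation `w` (0-indexed): column `j` consists of the rows `i`
with `w i > j` and `i < w⁻¹ j`. -/
def rothe {n : ℕ} (w : Equiv.Perm (Fin n)) (j : Fin n) : Finset (Fin n) :=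
  Finset.univ.filter fun i => j < w i ∧ i < w.symm j

/-- `w` contains the pattern `π`: there is a strictly increasing choice of positions on which
`w` is order isomorphic to `π`. -/
def ContainsPattern {n m : ℕ} (w : Equiv.Perm (Fin n)) (π : Fin m → ℕ) : Prop :=
  ∃ f : Fin m ↪o Fin n, ∀ s t : Fin m, π s < π t ↔ w (f s) < w (f t)

/-- `w` avoids the pattern `π`. -/
def AvoidsPattern {n m : ℕ} (w : Equiv.Perm (Fin n)) (π : Fin m → ℕ) : Prop :=
  ¬ ContainsPattern w π

/-- `D'_j`: the part of column `D_j` above which there is a gap, i.e. the elements `i ∈ D_j`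
such that some `k < i` has `k ∉ D_j`.  (Equivalently, `D_j ∖ [a_j]` where `a_j` is the largest
`a` with `{1,…,a} ⊆ D_j`.) -/
def gapPart {n : ℕ} (D : Finset (Fin n)) : Finset (Fin n) :=
  D.filter fun i => ∃ k < i, k ∉ D

/-!
Suppose row `i` lies in `D'_{j₁} ∩ D_{j₂}` with `j₁ < j₂`. The gap above `i` in column `j₁` is a row
`k < i` with `w k < j₁`. The values `w k < j₁ < j₂ < w i` occur at the positions `k < i`, followed
by the positions of `j₁` and `j₂` in one order or the other, which is a 1423 or a 1432 pattern.
-/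

section

variable {n m : ℕ} {w : Equiv.Perm (Fin n)} {i j a b c d : Fin n}

theorem mem_rothe : i ∈ rothe w j ↔ j < w i ∧ i < w.symm j := by
  simp [rothe]

theorem gapPart_subset (D : Finset (Fin n)) : gapPart D ⊆ D :=
  Finset.filter_subset _ _

theorem mem_gapPart_rothe : i ∈ gapPart (rothe w j) ↔ i ∈ rothe w j ∧ ∃ k < i, w k < j := by
  simp only [gapPart, Finset.mem_filter]
  refine and_congr_right fun hi => exists_congr fun k => and_congr_right fun hki => ?_
  have hk : k < w.symm j := hki.trans (mem_rothe.1 hi).2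
  have hne : w k ≠ j := fun h => hk.ne (w.eq_symm_apply.2 h)
  simp only [mem_rothe, hk, and_true, not_lt, hne.le_iff_lt]

/-- `σ` lists the entries of the pattern by increasing value, so that the order isomorphism only has
to be checked along a chain. -/
theorem containsPattern_of_strictMono_comp {ι : Type*} [LinearOrder ι] {π : Fin m → ℕ}
    {f : Fin m → Fin n} {σ : ι → Fin m} (hf : StrictMono f) (hσ : Function.Surjective σ)
    (hπ : StrictMono (π ∘ σ)) (hw : StrictMono (w ∘ f ∘ σ)) : ContainsPattern w π :=
  ⟨OrderEmbedding.ofStrictMono f hf,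
    hσ.forall₂.2 fun _ _ => hπ.lt_iff_lt.trans hw.lt_iff_lt.symm⟩

theorem containsPattern_1423 (hab : a < b) (hbc : b < c) (hcd : c < d)
    (hwac : w a < w c) (hwcd : w c < w d) (hwdb : w d < w b) : ContainsPattern w ![1, 4, 2, 3] := by
  have hw : StrictMono (w ∘ ![a, b, c, d] ∘ ![0, 2, 3, 1]) := by
    simp [Fin.strictMono_iff_lt_succ, Fin.forall_fin_succ, hwac, hwcd, hwdb]
  exact containsPattern_of_strictMono_comp (by simp [hab, hbc, hcd]) (by decide) (by decide) hw

theorem containsPattern_1432 (hab : a < b) (hbc : b < c) (hcd : c < d)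
    (hwad : w a < w d) (hwdc : w d < w c) (hwcb : w c < w b) : ContainsPattern w ![1, 4, 3, 2] := by
  have hw : StrictMono (w ∘ ![a, b, c, d] ∘ ![0, 3, 2, 1]) := by
    simp [Fin.strictMono_iff_lt_succ, Fin.forall_fin_succ, hwad, hwdc, hwcb]
  exact containsPattern_of_strictMono_comp (by simp [hab, hbc, hcd]) (by decide) (by decide) hw

theorem rothe_gapParts_disjoint_general (h1432 : AvoidsPattern w ![1, 4, 3, 2])
    (h1423 : AvoidsPattern w ![1, 4, 2, 3]) {j₁ j₂ : Fin n} (hj : j₁ < j₂) :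
    Disjoint (gapPart (rothe w j₁)) (rothe w j₂) := by
  refine Finset.disjoint_left.2 fun i hi₁ hi₂ => ?_
  obtain ⟨hi₁, k, hki, hkj⟩ := mem_gapPart_rothe.1 hi₁
  obtain ⟨-, hip₁⟩ := mem_rothe.1 hi₁
  obtain ⟨hji, hip₂⟩ := mem_rothe.1 hi₂
  rcases lt_or_gt_of_ne (w.symm.injective.ne hj.ne) with hp | hp
  · exact h1423 (containsPattern_1423 hki hip₁ hp (by simpa) (by simpa) (by simpa))
  · exact h1432 (containsPattern_1432 hki hip₂ hp (by simpa) (by simpa) (by simpa))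

end

/-- If `w` avoids 1432 and 1423, then the sets `D'_{j₁}` and `D'_{j₂}` coming from distinct
columns of the Rothe diagram of `w` are disjoint. -/
theorem rothe_gapParts_disjoint (n : ℕ) (hn : 1 ≤ n) (w : Equiv.Perm (Fin n))
    (h1432 : AvoidsPattern w ![1, 4, 3, 2]) (h1423 : AvoidsPattern w ![1, 4, 2, 3]) :
    ∀ j₁ j₂ : Fin n, j₁ < j₂ →
      Disjoint (gapPart (rothe w j₁)) (gapPart (rothe w j₂)) :=
  fun _ _ hj => (rothe_gapParts_disjoint_general h1432 h1423 hj).mono_right (gapPart_subset _)
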